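/- arXiv:1911.01465 — 2 statements merged into one kernel-verified Lean document; each statement's English description precedes it below -/
import Mathlib

section
/- Let k, r ∈ ℕ, let M be a finite multiset of vectors in {0,1,□}^d with cover (R_M, T_M), and let M' ⊆ M be such that the compatibility graph on M' with threshold r has at most k connected components, with γ_max(M') the maximum diameter of a connected component. Then there exists D' ⊆ [d] with |D'| ≤ k·γ_max(M')·(|M'|−1) + |R_M|·(|M'|−1)·(r+1) + |T_M| such that the following holds: there exist a completion of M' and a partition of that completion into at most k parts, each of diameter at most r, if and only if the multiset M'_{D'} of restrictions of the vectors of M' to the coordinates in D' admits a completion together with a partition into at most k parts, each of diameter at most r. -/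
open scoped Classical

/-- δ(a,b) for incomplete vectors: the number of coordinates on which
both entries are known and differ. -/
noncomputable def pdist {ι : Type} [Fintype ι] (a b : ι → Option Bool) : ℕ :=
  (Finset.univ.filter fun i => ∃ x y : Bool, a i = some x ∧ b i = some y ∧ x ≠ y).card

/-- The compatibility graph on a finite set of incomplete vectors with threshold ρ. -/
def compatGraph {ι : Type} [Fintype ι] (S : Finset (ι → Option Bool)) (ρ : ℕ) :
    SimpleGraph {x // x ∈ S} :=
  SimpleGraph.fromRel fun a b => pdist a.1 b.1 ≤ ρ

/-- γ_max: the maximum diameter of a connected component of the compatibility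
graph on `S` with threshold ρ. -/
noncomputable def gammaMax {ι : Type} [Fintype ι]
    (S : Finset (ι → Option Bool)) (ρ : ℕ) : ℕ :=
  sSup {n | ∃ a b : {x // x ∈ S}, (compatGraph S ρ).Reachable a b ∧ pdist a.1 b.1 = n}

/-- `Mc` is a completion of `M`: a multiset of complete vectors in bijection with `M`,
agreeing with the corresponding vectors on all non-missing entries. -/
def IsCompletion {ι : Type} (M : Multiset (ι → Option Bool))
    (Mc : Multiset (ι → Bool)) : Prop :=
  Multiset.Rel (fun a c => ∀ i (x : Bool), a i = some x → c i = x) M Mc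

/-- The multiset `Mc` of complete vectors can be partitioned into at most `k` parts,
each of diameter at most `r`. -/
def HasDiamPartitionM {ι : Type} [Fintype ι] (Mc : Multiset (ι → Bool)) (k r : ℕ) : Prop :=
  ∃ P : Multiset (Multiset (ι → Bool)), Multiset.card P ≤ k ∧ P.join = Mc ∧
    ∀ p ∈ P, ∀ a ∈ p, ∀ b ∈ p, hammingDist a b ≤ r

/-- The restriction of an incomplete vector to the coordinates in `D`. -/
def restrictV {ι : Type} (D : Finset ι) (a : ι → Option Bool) :
    {i // i ∈ D} → Option Bool :=
  fun i => a i.1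

/-- The coordinates on which both entries are known and differ. -/
noncomputable def disagree {ι : Type} [Fintype ι] (a b : ι → Option Bool) : Finset ι :=
  Finset.univ.filter fun i => ∃ x y : Bool, a i = some x ∧ b i = some y ∧ x ≠ y

theorem card_disagree {ι : Type} [Fintype ι] (a b : ι → Option Bool) :
    (disagree a b).card = pdist a b := rfl

theorem mem_disagree {ι : Type} [Fintype ι] {a b : ι → Option Bool} {i : ι} :
    i ∈ disagree a b ↔ ∃ x y : Bool, a i = some x ∧ b i = some y ∧ x ≠ y := by
  simp [disagree]

theorem disagree_comm {ι : Type} [Fintype ι] (a b : ι → Option Bool) :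
    disagree a b = disagree b a := by
  ext i
  simp only [mem_disagree]
  constructor <;> rintro ⟨x, y, hx, hy, h⟩ <;> exact ⟨y, x, hy, hx, h.symm⟩

theorem disagree_self {ι : Type} [Fintype ι] (a : ι → Option Bool) : disagree a a = ∅ := by
  ext i
  simp only [mem_disagree, Finset.notMem_empty, iff_false]
  rintro ⟨x, y, hx, hy, h⟩
  exact h (Option.some_injective _ (hx.symm.trans hy))

/-- The incomplete vectors `g x`, for `x ∈ S`, have completions `f x` and a colouring with `k`
colours whose classes have diameter at most `r`. -/
def HasColoredCompletion {X ι : Type} [Fintype ι] (S : Finset X) (g : X → ι → Option Bool)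
    (k r : ℕ) : Prop :=
  ∃ (f : X → ι → Bool) (χ : X → ℕ), (∀ x ∈ S, χ x < k) ∧
    (∀ x ∈ S, ∀ i b, g x i = some b → f x i = b) ∧
    ∀ x ∈ S, ∀ y ∈ S, χ x = χ y → hammingDist (f x) (f y) ≤ r

theorem sum_range_filter_eq {X : Type} (χ : X → ℕ) (k : ℕ) (M : Multiset X)
    (h : ∀ x ∈ M, χ x < k) :
    ∑ j ∈ Finset.range k, M.filter (fun x => χ x = j) = M := by
  induction M using Multiset.induction_on with
  | empty => simp
  | cons a M ih =>
    have ih' := ih fun x hx => h x (Multiset.mem_cons_of_mem hx)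
    simp only [Multiset.filter_cons, Finset.sum_add_distrib, ih']
    rw [Finset.sum_ite_eq, if_pos (Finset.mem_range.2 (h a (Multiset.mem_cons_self a M)))]
    rfl

theorem exists_completion_partition_iff {X ι : Type} [DecidableEq X] [Fintype ι] (M : Multiset X)
    (g : X → ι → Option Bool) (k r : ℕ) :
    (∃ Nc : Multiset (ι → Bool), IsCompletion (M.map g) Nc ∧ HasDiamPartitionM Nc k r) ↔
      HasColoredCompletion M.toFinset g k r := by
  constructor
  · rintro ⟨Nc, hNc, P, hPk, rfl, hP⟩
    have key : ∀ x : X, ∃ (c : ι → Bool) (p : Multiset (ι → Bool)), x ∈ M →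
        (∀ i b, g x i = some b → c i = b) ∧ p ∈ P ∧ c ∈ p := by
      intro x
      by_cases hx : x ∈ M
      · obtain ⟨c, hc, hgc⟩ :=
          Multiset.exists_mem_of_rel_of_mem (Multiset.rel_map_left.1 hNc) hx
        obtain ⟨p, hp, hcp⟩ := Multiset.mem_join.1 hc
        exact ⟨c, p, fun _ => ⟨hgc, hp, hcp⟩⟩
      · exact ⟨fun _ => false, 0, fun h => absurd h hx⟩
    choose f p hfp using key
    refine ⟨f, fun x => P.toList.idxOf (p x), fun x hx => ?_, fun x hx => ?_,
      fun x hx y hy hxy => ?_⟩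
    · have hmem := Multiset.mem_toList.2 (hfp x (Multiset.mem_toFinset.1 hx)).2.1
      have := List.idxOf_lt_length_iff.2 hmem
      rw [Multiset.length_toList] at this
      exact this.trans_le hPk
    · exact (hfp x (Multiset.mem_toFinset.1 hx)).1
    · obtain ⟨-, hpx, hfx⟩ := hfp x (Multiset.mem_toFinset.1 hx)
      obtain ⟨-, -, hfy⟩ := hfp y (Multiset.mem_toFinset.1 hy)
      rw [List.idxOf_inj (Multiset.mem_toList.2 hpx)] at hxy
      exact hP _ hpx _ hfx _ (hxy ▸ hfy)
  · rintro ⟨f, χ, hχ, hf, hr⟩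
    simp only [Multiset.mem_toFinset] at hχ hf hr
    refine ⟨M.map f, ?_, (Multiset.range k).map fun j => (M.filter fun x => χ x = j).map f,
      by simp, ?_, ?_⟩
    · exact Multiset.rel_map.2 (Multiset.rel_refl_of_refl_on hf)
    · conv_rhs => rw [← sum_range_filter_eq χ k M hχ]
      exact (map_sum (Multiset.mapAddMonoidHom f) (fun j => M.filter fun x => χ x = j)
        (Finset.range k)).symm
    · simp only [Multiset.mem_map]
      rintro _ ⟨j, -, rfl⟩ a ha b hb
      obtain ⟨x, ⟨hx, hxj⟩, rfl⟩ := by simpa only [Multiset.mem_map, Multiset.mem_filter] using ha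
      obtain ⟨y, ⟨hy, hyj⟩, rfl⟩ := by simpa only [Multiset.mem_map, Multiset.mem_filter] using hb
      exact hr x hx y hy (hxj.trans hyj.symm)

/-- Restricting to `D` loses no solutions, provided `D` keeps all the disagreements of any two
vectors, or at least more than `r` of them. -/
theorem HasColoredCompletion.of_restrict {ι : Type} [Fintype ι] [DecidableEq ι]
    {S : Finset (ι → Option Bool)} {D : Finset ι} {k r : ℕ}
    (hD : ∀ v ∈ S, ∀ w ∈ S, disagree v w ⊆ D ∨ r < (disagree v w ∩ D).card)
    (h : HasColoredCompletion S (restrictV D) k r) : HasColoredCompletion S id k r := by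
  obtain ⟨f, χ, hχ, hf, hr⟩ := h
  have hsub : ∀ v ∈ S, ∀ w ∈ S, χ v = χ w → disagree v w ⊆ D := by
    intro v hv w hw hvw
    refine (hD v hv w hw).resolve_right (not_lt.2 (le_trans ?_ (hr v hv w hw hvw)))
    rw [hammingDist, ← Finset.card_map (Function.Embedding.subtype _)]
    refine Finset.card_le_card fun i hi => ?_
    obtain ⟨hi, hiD⟩ := Finset.mem_inter.1 hi
    obtain ⟨x, y, hx, hy, hxy⟩ := mem_disagree.1 hi
    refine Finset.mem_map.2 ⟨⟨i, hiD⟩, ?_, rfl⟩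
    simpa [hf v hv ⟨i, hiD⟩ x hx, hf w hw ⟨i, hiD⟩ y hy] using hxy
  let fill : ℕ → ι → Bool := fun c i => decide (∃ w ∈ S, χ w = c ∧ w i = some true)
  refine ⟨fun v i => if hi : i ∈ D then f v ⟨i, hi⟩ else fill (χ v) i, χ, hχ, ?_, ?_⟩
  · intro v hv i b hb
    by_cases hi : i ∈ D
    · simpa [hi] using hf v hv ⟨i, hi⟩ b hb
    · simp only [hi, dite_false, fill]
      cases b with
      | true => simpa using ⟨v, hv, rfl, hb⟩
      | false =>
        simp only [decide_eq_false_iff_not]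
        rintro ⟨w, hw, hwv, hwi⟩
        exact hi (hsub w hw v hv hwv (mem_disagree.2 ⟨true, false, hwi, hb, by simp⟩))
  · intro v hv w hw hvw
    refine le_trans ?_ (hr v hv w hw hvw)
    rw [hammingDist, hammingDist, ← Finset.card_map (Function.Embedding.subtype _)]
    refine Finset.card_le_card fun i hi => ?_
    by_cases hiD : i ∈ D
    · exact Finset.mem_map.2 ⟨⟨i, hiD⟩, by simpa [hiD] using hi, rfl⟩
    · simp [hiD, hvw] at hi

/-- Few coordinates of `U` tell apart all members of `P` that differ somewhere on `U`. -/
theorem exists_separating_coords {ι β : Type} (P : Finset (ι → β)) (U : Finset ι) :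
    ∃ B ⊆ U, B.card ≤ P.card - 1 ∧
      ∀ p ∈ P, ∀ q ∈ P, (∀ i ∈ B, p i = q i) → ∀ i ∈ U, p i = q i := by
  induction P using Finset.induction_on with
  | empty => exact ⟨∅, by simp⟩
  | insert p P hp ih =>
    obtain ⟨B, hBU, hB, hsep⟩ := ih
    by_cases hex : ∃ q ∈ P, (∀ i ∈ B, p i = q i) ∧ ∃ i ∈ U, p i ≠ q i
    · obtain ⟨q, hq, hqB, j, hjU, hj⟩ := hex
      refine ⟨insert j B, Finset.insert_subset hjU hBU, ?_, ?_⟩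
      · have := Finset.card_insert_le j B
        have := Finset.card_pos.2 ⟨q, hq⟩
        rw [Finset.card_insert_of_notMem hp]
        omega
      · have hne : ∀ q' ∈ P, ¬ ∀ i ∈ insert j B, p i = q' i := by
          intro q' hq' h
          refine hj ((h j (Finset.mem_insert_self j B)).trans (hsep q' hq' q hq ?_ j hjU))
          exact fun i hi => (h i (Finset.mem_insert_of_mem hi)).symm.trans (hqB i hi)
        intro a ha b hb hab
        rcases Finset.mem_insert.1 ha with rfl | haP <;>
          rcases Finset.mem_insert.1 hb with rfl | hbP
        · exact fun _ _ => rfl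
        · exact absurd hab (hne b hbP)
        · exact absurd (fun i hi => (hab i hi).symm) (hne a haP)
        · exact hsep a haP b hbP fun i hi => hab i (Finset.mem_insert_of_mem hi)
    · push Not at hex
      refine ⟨B, hBU, hB.trans ?_, ?_⟩
      · rw [Finset.card_insert_of_notMem hp]
        omega
      · intro a ha b hb hab
        rcases Finset.mem_insert.1 ha with rfl | haP <;>
          rcases Finset.mem_insert.1 hb with rfl | hbP
        · exact fun _ _ => rfl
        · exact hex b hbP hab
        · exact fun i hi => (hex a haP (fun i hi => (hab i hi).symm) i hi).symm
        · exact hsep a haP b hbP hab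

/-- Few coordinates of `U` keep, for any two members of `P`, all their differences on `U` or at
least `n` of them. -/
theorem exists_multiply_separating_coords {ι β : Type} [DecidableEq β] (P : Finset (ι → β))
    (U : Finset ι) (n : ℕ) :
    ∃ B ⊆ U, B.card ≤ (P.card - 1) * n ∧
      ∀ p ∈ P, ∀ q ∈ P, (∀ i ∈ U, p i ≠ q i → i ∈ B) ∨ n ≤ (B.filter fun i => p i ≠ q i).card := by
  induction n with
  | zero => exact ⟨∅, by simp⟩
  | succ n ih =>
    obtain ⟨B, hBU, hB, hsep⟩ := ih
    obtain ⟨B', hBU', hB', hsep'⟩ := exists_separating_coords P (U \ B)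
    refine ⟨B ∪ B', Finset.union_subset hBU (hBU'.trans Finset.sdiff_subset), ?_, ?_⟩
    · have := Finset.card_union_le B B'
      rw [Nat.mul_succ]
      omega
    · intro p hp q hq
      rcases hsep p hp q hq with h | h
      · exact Or.inl fun i hi hpq => Finset.mem_union_left _ (h i hi hpq)
      by_cases hall : ∀ i ∈ B', p i = q i
      · refine Or.inl fun i hi hpq => Finset.mem_union_left _ ?_
        by_contra hiB
        exact hpq (hsep' p hp q hq hall i (Finset.mem_sdiff.2 ⟨hi, hiB⟩))
      · push Not at hall
        obtain ⟨j, hj, hpq⟩ := hall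
        have hjB : j ∉ B := (Finset.mem_sdiff.1 (hBU' hj)).2
        refine Or.inr (le_trans ?_ (Finset.card_le_card
          (s := insert j (B.filter fun i => p i ≠ q i)) ?_))
        · rw [Finset.card_insert_of_notMem (by simp [hjB])]
          omega
        · intro i
          simp only [Finset.mem_insert, Finset.mem_filter, Finset.mem_union]
          rintro (rfl | ⟨hi, hne⟩)
          · exact ⟨Or.inr hj, hpq⟩
          · exact ⟨Or.inl hi, hne⟩

/-- There is a complete vector whose conflicts with each `v ∈ C` number at most half (rounded up)
of the total number of conflicts of `v` with the members of `C`. -/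
theorem exists_balanced_center {ι : Type} [Fintype ι] (C : Finset (ι → Option Bool)) :
    ∃ p : ι → Bool, ∀ v ∈ C,
      2 * (Finset.univ.filter fun i => v i = some (!p i)).card ≤ ∑ u ∈ C, pdist u v + 1 := by
  let A : Bool → ι → Finset (ι → Option Bool) := fun b i => C.filter fun v => v i = some b
  have hA : ∀ {b i v}, v ∈ A b i ↔ v ∈ C ∧ v i = some b := by simp [A]
  let I : Finset ι := Finset.univ.filter fun i => (A true i).card = 1 ∧ (A false i).card = 1
  have hI : ∀ {i}, i ∈ I → ∀ b, (A b i).card = 1 := by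
    intro i hi b
    have := (Finset.mem_filter.1 hi).2
    cases b
    exacts [this.2, this.1]
  let deg : (ι → Option Bool) → ℕ := fun v => (I.filter fun i => v i ≠ none).card
  let known : ι → Finset (ι → Option Bool) := fun i => C.filter fun v => v i ≠ none
  have hknown : ∀ i ∈ I, (known i).card = 2 := by
    intro i hi
    have hu : known i = A true i ∪ A false i := by
      ext v
      simp only [known, Finset.mem_filter, Finset.mem_union, hA]
      rcases v i with _ | _ | _ <;> simp
    have hd : Disjoint (A true i) (A false i) := by
      refine Finset.disjoint_left.2 fun v hv hv' => ?_
      exact absurd ((hA.1 hv).2.symm.trans (hA.1 hv').2) (by simp)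
    rw [hu, Finset.card_union_of_disjoint hd, hI hi, hI hi]
  let t : I → Finset (Σ _ : ι → Option Bool, ℕ) := fun i =>
    (known i).sigma fun v => Finset.range ((deg v + 1) / 2)
  -- By Hall's theorem the two-sided coordinates can be distributed evenly among the vectors.
  obtain ⟨σ, hσinj, hσ⟩ : ∃ σ : I → (Σ _ : ι → Option Bool, ℕ),
      Function.Injective σ ∧ ∀ i, σ i ∈ t i := by
    refine (Finset.all_card_le_biUnion_card_iff_exists_injective t).1 fun F => ?_
    have hbi : F.biUnion t =
        (F.biUnion fun i => known i).sigma fun v => Finset.range ((deg v + 1) / 2) := by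
      ext x
      simp only [t, Finset.mem_biUnion, Finset.mem_sigma]
      constructor
      · rintro ⟨i, hi, h1, h2⟩
        exact ⟨⟨i, hi, h1⟩, h2⟩
      · rintro ⟨⟨i, hi, h1⟩, h2⟩
        exact ⟨i, hi, h1, h2⟩
    rw [hbi, Finset.card_sigma]
    set K := F.biUnion fun i => known i with hK
    have h1 : 2 * F.card = ∑ i ∈ F, (known i).card := by
      rw [Finset.sum_congr rfl fun i _ => hknown i.1 i.2, Finset.sum_const, smul_eq_mul, mul_comm]
    have h2 : ∑ i ∈ F, (known i).card = ∑ v ∈ K, (F.filter fun i : I => v i ≠ none).card := by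
      have : ∀ i ∈ F, known i = K.filter fun v => v i ≠ none := by
        intro i hi
        ext v
        simp only [hK, Finset.mem_filter, Finset.mem_biUnion]
        constructor
        · exact fun hv => ⟨⟨i, hi, hv⟩, (Finset.mem_filter.1 hv).2⟩
        · rintro ⟨⟨j, -, hv⟩, hvi⟩
          exact Finset.mem_filter.2 ⟨(Finset.mem_filter.1 hv).1, hvi⟩
      rw [Finset.sum_congr rfl fun i hi => congrArg Finset.card (this i hi)]
      exact Finset.sum_card_bipartiteAbove_eq_sum_card_bipartiteBelow
        (fun (i : I) (v : ι → Option Bool) => v i ≠ none)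
    have h3 : ∑ v ∈ K, (F.filter fun i : I => v i ≠ none).card ≤
        ∑ v ∈ K, 2 * ((deg v + 1) / 2) := by
      refine Finset.sum_le_sum fun v _ => ?_
      have : (F.filter fun i : I => v i ≠ none).card ≤ deg v := by
        rw [← Finset.card_map (Function.Embedding.subtype _)]
        refine Finset.card_le_card fun i hi => ?_
        obtain ⟨j, hj, rfl⟩ := Finset.mem_map.1 hi
        exact Finset.mem_filter.2 ⟨j.2, (Finset.mem_filter.1 hj).2⟩
      omega
    rw [← Finset.mul_sum] at h3
    simp only [Finset.card_range]
    omega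
  let p : ι → Bool := fun i =>
    if hi : i ∈ I then decide ((σ ⟨i, hi⟩).1 i = some false)
    else decide ((A false i).card ≤ (A true i).card)
  refine ⟨p, fun v hv => ?_⟩
  have hpI : ∀ i (hi : i ∈ I), v i = some (!p i) → (σ ⟨i, hi⟩).1 = v := by
    intro i hi hvi
    have hs := Finset.mem_filter.1 (Finset.mem_sigma.1 (hσ ⟨i, hi⟩)).1
    have hsi : (σ ⟨i, hi⟩).1 i = some (!p i) := by
      simp only [p, hi, dite_true]
      rcases hx : (σ ⟨i, hi⟩).1 i with _ | _ | _
      · exact absurd hx hs.2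
      · simp
      · simp
    exact Finset.card_le_one.1 (hI hi (!p i)).le _ (hA.2 ⟨hs.1, hsi⟩) _ (hA.2 ⟨hv, hvi⟩)
  have hpI' : ∀ i, i ∉ I → v i = some (!p i) → 2 ≤ (A (p i) i).card := by
    intro i hi hvi
    have hpos : 0 < (A (!p i) i).card := Finset.card_pos.2 ⟨v, hA.2 ⟨hv, hvi⟩⟩
    have hne : ¬ ((A true i).card = 1 ∧ (A false i).card = 1) := by simpa [I] using hi
    have hp : p i = decide ((A false i).card ≤ (A true i).card) := by simp [p, hi]
    by_cases hle : (A false i).card ≤ (A true i).card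
    · simp only [hle, decide_true] at hp
      simp only [hp, Bool.not_true] at hpos ⊢
      omega
    · simp only [hle, decide_false] at hp
      simp only [hp, Bool.not_false] at hpos ⊢
      omega
  set W := Finset.univ.filter fun i => v i = some (!p i)
  have hW1 : 2 * (W.filter fun i => i ∈ I).card ≤ deg v + 1 := by
    have : (W.filter fun i => i ∈ I).card ≤ (Finset.range ((deg v + 1) / 2)).card := by
      refine Finset.card_le_card_of_injOn
        (fun i => if hi : i ∈ I then (σ ⟨i, hi⟩).2 else 0) ?_ ?_
      · intro i hi
        obtain ⟨hiW, hiI⟩ := Finset.mem_filter.1 hi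
        have h := (Finset.mem_sigma.1 (hσ ⟨i, hiI⟩)).2
        rw [hpI i hiI (Finset.mem_filter.1 hiW).2] at h
        simpa [hiI] using h
      · intro i hi j hj hij
        obtain ⟨hiW, hiI⟩ := Finset.mem_filter.1 hi
        obtain ⟨hjW, hjI⟩ := Finset.mem_filter.1 hj
        simp only [hiI, hjI, dite_true] at hij
        have h1 := hpI i hiI (Finset.mem_filter.1 hiW).2
        have h2 := hpI j hjI (Finset.mem_filter.1 hjW).2
        exact congrArg Subtype.val (hσinj (Sigma.ext (h1.trans h2.symm) (heq_of_eq hij)))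
    rw [Finset.card_range] at this
    omega
  have hsum : ∑ u ∈ C, pdist u v = ∑ i, (C.filter fun u => i ∈ disagree u v).card := by
    refine Eq.trans ?_ (Finset.sum_card_bipartiteAbove_eq_sum_card_bipartiteBelow
      (fun u i => i ∈ disagree u v))
    refine Finset.sum_congr rfl fun u _ => ?_
    rw [← card_disagree]
    congr 1
    ext i
    simp [Finset.bipartiteAbove]
  have hconf : ∀ i b, v i = some (!b) → (C.filter fun u => i ∈ disagree u v) = A b i := by
    intro i b hvi
    ext u
    simp only [Finset.mem_filter, mem_disagree, hA, hvi]
    rcases u i with _ | _ | _ <;> cases b <;> simp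
  have hlow : deg v + 2 * (W.filter fun i => i ∉ I).card ≤ ∑ u ∈ C, pdist u v := by
    rw [hsum, ← Finset.sum_filter_add_sum_filter_not Finset.univ (fun i => i ∈ I)]
    refine add_le_add ?_ ?_
    · rw [Finset.filter_univ_mem]
      simp only [deg, Finset.card_filter]
      refine Finset.sum_le_sum fun i hi => ?_
      rw [← Finset.card_filter]
      split_ifs with hvi
      · obtain ⟨b, hb⟩ := Option.ne_none_iff_exists'.1 hvi
        rw [hconf i (!b) (by simpa using hb), hI hi]
      · exact Nat.zero_le _
    · rw [mul_comm, ← smul_eq_mul, ← Finset.sum_const]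
      refine le_trans (Finset.sum_le_sum fun i hi => ?_)
        (Finset.sum_le_sum_of_subset (Finset.filter_subset_filter _ (Finset.subset_univ W)))
      obtain ⟨hiW, hiI⟩ := Finset.mem_filter.1 hi
      have hvi := (Finset.mem_filter.1 hiW).2
      rw [hconf i (p i) hvi]
      exact hpI' i hiI hvi
  have := Finset.card_filter_add_card_filter_not (s := W) (fun i => i ∈ I)
  omega

/-- Incomplete vectors with pairwise distances at most `γ` have completions with pairwise distances
at most `γ` times their number. -/
theorem exists_completion_hammingDist_le {ι : Type} [Fintype ι] (C : Finset (ι → Option Bool))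
    (γ : ℕ) (hC : ∀ u ∈ C, ∀ v ∈ C, pdist u v ≤ γ) :
    ∃ f : (ι → Option Bool) → ι → Bool, (∀ v i b, v i = some b → f v i = b) ∧
      ∀ u ∈ C, ∀ v ∈ C, hammingDist (f u) (f v) ≤ γ * C.card := by
  obtain ⟨p, hp⟩ := exists_balanced_center C
  refine ⟨fun v i => (v i).getD (p i), fun v i b h => by simp [h], fun u hu v hv => ?_⟩
  have hw : ∀ w ∈ C, 2 * (Finset.univ.filter fun i => w i = some (!p i)).card ≤ γ * C.card := by
    intro w hw
    have h1 : ∑ x ∈ C, pdist x w ≤ γ * (C.card - 1) := by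
      rw [← Finset.add_sum_erase C _ hw, ← card_disagree w w, disagree_self, Finset.card_empty,
        zero_add, mul_comm, ← smul_eq_mul, ← Finset.card_erase_of_mem hw]
      exact Finset.sum_le_card_nsmul _ _ _ fun x hx => hC x (Finset.mem_of_mem_erase hx) w hw
    have h2 := hp w hw
    obtain ⟨m, hm⟩ := Nat.exists_eq_add_of_lt (Finset.card_pos.2 ⟨w, hw⟩)
    rw [hm] at h1 ⊢
    simp only [zero_add, Nat.add_sub_cancel] at h1 ⊢
    rcases Nat.eq_zero_or_pos γ with rfl | hγ
    · omega
    · rw [Nat.mul_succ]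
      omega
  have hsub : hammingDist (fun i => (u i).getD (p i)) (fun i => (v i).getD (p i)) ≤
      (Finset.univ.filter fun i => u i = some (!p i)).card +
        (Finset.univ.filter fun i => v i = some (!p i)).card := by
    refine le_trans (Finset.card_le_card fun i hi => ?_) (Finset.card_union_le _ _)
    simp only [Finset.mem_filter, Finset.mem_univ, true_and, Finset.mem_union] at hi ⊢
    revert hi
    rcases u i with _ | _ | _ <;> rcases v i with _ | _ | _ <;> cases p i <;> simp
  refine hsub.trans ?_
  have := hw u hu
  have := hw v hv
  omega

/-- The components of the compatibility graph, numbered below `k`. -/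
theorem exists_component_coloring {ι : Type} [Fintype ι] (S : Finset (ι → Option Bool)) (k r : ℕ)
    (hcomp : Nat.card (compatGraph S r).ConnectedComponent ≤ k) :
    ∃ c : (ι → Option Bool) → ℕ, (∀ v ∈ S, c v < k) ∧
      ∀ v ∈ S, ∀ w ∈ S, c v = c w → pdist v w ≤ gammaMax S r := by
  let e := Finite.equivFin (compatGraph S r).ConnectedComponent
  refine ⟨fun v => if hv : v ∈ S then
    (e ((compatGraph S r).connectedComponentMk ⟨v, hv⟩) : ℕ) else 0, ?_, ?_⟩
  · intro v hv
    simpa [hv] using (e _).2.trans_le hcomp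
  · intro v hv w hw h
    simp only [hv, hw, dite_true, Fin.val_inj, e.apply_eq_iff_eq,
      SimpleGraph.ConnectedComponent.eq] at h
    refine le_csSup (Set.Finite.bddAbove ?_) ⟨⟨v, hv⟩, ⟨w, hw⟩, h, rfl⟩
    refine (Set.finite_range fun x : S × S => pdist x.1.1 x.2.1).subset ?_
    rintro n ⟨a, b, -, rfl⟩
    exact ⟨(a, b), rfl⟩

/-- If `r` is large compared to the diameters of the colour classes, each class can be completed
within diameter `r`. -/
theorem hasColoredCompletion_of_mul_card_le {ι : Type} [Fintype ι] {S : Finset (ι → Option Bool)}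
    {k r γ : ℕ} {c : (ι → Option Bool) → ℕ} (hck : ∀ v ∈ S, c v < k)
    (hγ : ∀ v ∈ S, ∀ w ∈ S, c v = c w → pdist v w ≤ γ) (hr : γ * S.card ≤ r) :
    HasColoredCompletion S id k r := by
  have key : ∀ j : ℕ, ∃ f : (ι → Option Bool) → ι → Bool, (∀ v i b, v i = some b → f v i = b) ∧
      ∀ u ∈ S, ∀ v ∈ S, c u = j → c v = j → hammingDist (f u) (f v) ≤ r := by
    intro j
    obtain ⟨f, hf, hd⟩ := exists_completion_hammingDist_le (S.filter fun v => c v = j) γ (by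
      simp only [Finset.mem_filter]
      rintro u ⟨hu, huj⟩ v ⟨hv, hvj⟩
      exact hγ u hu v hv (huj.trans hvj.symm))
    refine ⟨f, hf, fun u hu v hv huj hvj => (hd u (Finset.mem_filter.2 ⟨hu, huj⟩) v
      (Finset.mem_filter.2 ⟨hv, hvj⟩)).trans (le_trans ?_ hr)⟩
    exact Nat.mul_le_mul_left γ (Finset.card_filter_le _ _)
  choose f hf hd using key
  refine ⟨fun v => f (c v) v, c, hck, fun v _ i b h => hf _ _ _ _ h, fun u hu v hv huv => ?_⟩
  have := hd (c v) u hu v hv huv rfl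
  simpa only [huv] using this

/-- A small set of coordinates keeping all the disagreements of any two vectors in `S`, one of
which lies in `R`, or more than `r` of them. -/
theorem exists_coords_of_mem {ι : Type} [Fintype ι] [DecidableEq ι]
    (S R : Finset (ι → Option Bool)) (r : ℕ) :
    ∃ D : Finset ι, D.card ≤ (S ∩ R).card * (S.card - 1) * (r + 1) ∧
      ∀ v ∈ S ∩ R, ∀ w ∈ S, disagree v w ⊆ D ∨ r < (disagree v w ∩ D).card := by
  have key : ∀ v w : ι → Option Bool, ∃ E ⊆ disagree v w, E.card ≤ r + 1 ∧
      (disagree v w ⊆ E ∨ r < E.card) := by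
    intro v w
    by_cases h : (disagree v w).card ≤ r + 1
    · exact ⟨_, Finset.Subset.refl _, h, Or.inl (Finset.Subset.refl _)⟩
    · obtain ⟨E, hE, hcard⟩ := Finset.exists_subset_card_eq (not_le.1 h).le
      exact ⟨E, hE, hcard.le, Or.inr (by omega)⟩
  choose E hE hEr hEsep using key
  refine ⟨(S ∩ R).biUnion fun v => (S.erase v).biUnion fun w => E v w, ?_, ?_⟩
  · rw [mul_assoc]
    refine Finset.card_biUnion_le_card_mul _ _ _ fun v hv => ?_
    rw [← Finset.card_erase_of_mem (Finset.mem_inter.1 hv).1]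
    exact Finset.card_biUnion_le_card_mul _ _ _ fun w _ => hEr v w
  · intro v hv w hw
    by_cases hvw : w = v
    · left
      rw [hvw, disagree_self]
      exact Finset.empty_subset _
    · have hsub : E v w ⊆ (S ∩ R).biUnion fun v => (S.erase v).biUnion fun w => E v w := by
        intro i hi
        exact Finset.mem_biUnion.2 ⟨v, hv, Finset.mem_biUnion.2
          ⟨w, Finset.mem_erase.2 ⟨hvw, hw⟩, hi⟩⟩
      rcases hEsep v w with h | h
      · exact Or.inl (h.trans hsub)
      · exact Or.inr (h.trans_le (Finset.card_le_card (Finset.subset_inter (hE v w) hsub)))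

/-- A small set of coordinates containing `T` and keeping all the disagreements, or more than `r`
of them, of any two vectors in `H`, when missing entries of `H` occur only in `T`. -/
theorem exists_coords_of_known {ι : Type} [Fintype ι] [DecidableEq ι]
    {H : Finset (ι → Option Bool)} {T : Finset ι} {k r γ n : ℕ} {c : (ι → Option Bool) → ℕ}
    (hT : ∀ v ∈ H, ∀ i, v i = none → i ∈ T) (hck : ∀ v ∈ H, c v < k)
    (hγ : ∀ v ∈ H, ∀ w ∈ H, c v = c w → pdist v w ≤ γ)
    (hn : H.card ≤ n) (hr : r < γ * n) :
    ∃ D : Finset ι, D.card ≤ k * γ * (n - 1) + T.card ∧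
      ∀ v ∈ H, ∀ w ∈ H, disagree v w ⊆ D ∨ r < (disagree v w ∩ D).card := by
  have hrep : ∀ j : ℕ, ∃ u : ι → Option Bool, j ∈ H.image c → u ∈ H ∧ c u = j := by
    intro j
    by_cases hj : j ∈ H.image c
    · obtain ⟨u, hu, huj⟩ := Finset.mem_image.1 hj
      exact ⟨u, fun _ => ⟨hu, huj⟩⟩
    · exact ⟨fun _ => none, fun h => absurd h hj⟩
  choose rep hrep using hrep
  have hρ : ∀ v ∈ H, rep (c v) ∈ H ∧ c (rep (c v)) = c v := fun v hv =>
    hrep _ (Finset.mem_image_of_mem c hv)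
  set P := (H.image c).image rep
  have hρP : ∀ v ∈ H, rep (c v) ∈ P := fun v hv =>
    Finset.mem_image_of_mem _ (Finset.mem_image_of_mem _ hv)
  have hPH : P ⊆ H := by
    intro p hp
    obtain ⟨j, hj, rfl⟩ := Finset.mem_image.1 hp
    exact (hrep j hj).1
  have hPfix : ∀ p ∈ P, rep (c p) = p := by
    intro p hp
    obtain ⟨j, hj, rfl⟩ := Finset.mem_image.1 hp
    rw [(hrep j hj).2]
  have hPk : P.card ≤ k := by
    refine Finset.card_image_le.trans ?_
    refine (Finset.card_le_card (t := Finset.range k) fun j hj => ?_).trans_eq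
      (Finset.card_range k)
    obtain ⟨v, hv, rfl⟩ := Finset.mem_image.1 hj
    exact Finset.mem_range.2 (hck v hv)
  set D₁ := (H \ P).biUnion fun v => disagree v (rep (c v))
  have hD₁card : D₁.card ≤ (H.card - P.card) * γ := by
    rw [← Finset.card_sdiff_of_subset hPH]
    refine Finset.card_biUnion_le_card_mul _ _ _ fun v hv => ?_
    have hvH := (Finset.mem_sdiff.1 hv).1
    exact hγ v hvH _ (hρ v hvH).1 (hρ v hvH).2.symm
  have hknown : ∀ v ∈ H, ∀ i, i ∉ T ∪ D₁ → v i = rep (c v) i := by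
    intro v hv i hi
    rw [Finset.mem_union, not_or] at hi
    by_cases hvP : v ∈ P
    · rw [hPfix v hvP]
    obtain ⟨x, hx⟩ := Option.ne_none_iff_exists'.1 fun h => hi.1 (hT v hv i h)
    obtain ⟨y, hy⟩ := Option.ne_none_iff_exists'.1 fun h => hi.1 (hT _ (hρ v hv).1 i h)
    by_contra hne
    refine hi.2 (Finset.mem_biUnion.2 ⟨v, Finset.mem_sdiff.2 ⟨hv, hvP⟩,
      mem_disagree.2 ⟨x, y, hx, hy, ?_⟩⟩)
    rintro rfl
    exact hne (hx.trans hy.symm)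
  obtain ⟨D₂, hD₂U, hD₂card, hD₂⟩ :=
    exists_multiply_separating_coords P (Finset.univ \ (T ∪ D₁)) (r + 1)
  refine ⟨T ∪ D₁ ∪ D₂, ?_, ?_⟩
  · have h1 := Finset.card_union_le (T ∪ D₁) D₂
    have h2 := Finset.card_union_le T D₁
    suffices (H.card - P.card) * γ + (P.card - 1) * (r + 1) ≤ k * γ * (n - 1) by omega
    rcases P.eq_empty_or_nonempty with hP0 | hP0
    · have hH : H = ∅ := by
        refine Finset.eq_empty_of_forall_notMem fun v hv => ?_
        have := hρP v hv
        simp [hP0] at this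
      simp [hH, hP0]
    · have hPpos := Finset.card_pos.2 hP0
      have hPn := (Finset.card_le_card hPH).trans hn
      obtain ⟨q, hq⟩ := Nat.exists_eq_add_of_lt hPpos
      obtain ⟨m, rfl⟩ := Nat.exists_eq_add_of_le hPn
      calc (H.card - P.card) * γ + (P.card - 1) * (r + 1)
          ≤ m * γ + q * (γ * (P.card + m)) := by
            refine add_le_add (Nat.mul_le_mul_right _ (by omega)) (Nat.mul_le_mul (by omega) hr)
        _ = P.card * γ * (P.card + m - 1) := by
            rw [hq]
            simp only [zero_add, show q + 1 + m - 1 = q + m by omega]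
            ring
        _ ≤ k * γ * (P.card + m - 1) := by gcongr
  · intro v hv w hw
    rcases hD₂ _ (hρP v hv) _ (hρP w hw) with h | h
    · left
      intro i hi
      by_contra hiD
      rw [Finset.mem_union, not_or] at hiD
      refine hiD.2 (h i (Finset.mem_sdiff.2 ⟨Finset.mem_univ i, hiD.1⟩) ?_)
      rw [← hknown v hv i hiD.1, ← hknown w hw i hiD.1]
      obtain ⟨x, y, hx, hy, hxy⟩ := mem_disagree.1 hi
      rw [hx, hy]
      exact fun h => hxy (Option.some_injective _ h)
    · right
      refine lt_of_lt_of_le h (Finset.card_le_card fun i hi => ?_)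
      obtain ⟨hiD, hne⟩ := Finset.mem_filter.1 hi
      have hiTD := (Finset.mem_sdiff.1 (hD₂U hiD)).2
      have hiT : i ∉ T := fun h => hiTD (Finset.mem_union_left _ h)
      refine Finset.mem_inter.2 ⟨?_, Finset.mem_union_right _ hiD⟩
      rw [← hknown v hv i hiTD, ← hknown w hw i hiTD] at hne
      obtain ⟨x, hx⟩ := Option.ne_none_iff_exists'.1 fun h => hiT (hT v hv i h)
      obtain ⟨y, hy⟩ := Option.ne_none_iff_exists'.1 fun h => hiT (hT w hw i h)
      refine mem_disagree.2 ⟨x, y, hx, hy, ?_⟩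
      rintro rfl
      exact hne (hx.trans hy.symm)

theorem HasColoredCompletion.restrict {ι : Type} [Fintype ι] {S : Finset (ι → Option Bool)}
    {k r : ℕ} (h : HasColoredCompletion S id k r) (D : Finset ι) :
    HasColoredCompletion S (restrictV D) k r := by
  obtain ⟨f, χ, hχ, hf, hr⟩ := h
  refine ⟨fun v i => f v i, χ, hχ, fun v hv i b hb => hf v hv i b hb, fun v hv w hw hvw => ?_⟩
  refine le_trans ?_ (hr v hv w hw hvw)
  rw [hammingDist, hammingDist, ← Finset.card_map (Function.Embedding.subtype _)]
  refine Finset.card_le_card fun i hi => ?_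
  obtain ⟨j, hj, rfl⟩ := Finset.mem_map.1 hi
  simpa using hj

theorem statement_8 {d : ℕ} (k r : ℕ)
    (M R : Multiset (Fin d → Option Bool)) (T : Finset (Fin d))
    (hRM : R ≤ M)
    (hcover : ∀ v ∈ M, ∀ i : Fin d, v i = none → v ∈ R ∨ i ∈ T)
    (M' : Multiset (Fin d → Option Bool)) (hM'M : M' ≤ M)
    (hcomp : Nat.card (compatGraph M'.toFinset r).ConnectedComponent ≤ k) :
    ∃ D' : Finset (Fin d),
      D'.card ≤ k * gammaMax M'.toFinset r * (Multiset.card M' - 1)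
          + Multiset.card R * (Multiset.card M' - 1) * (r + 1) + T.card ∧
      ((∃ Mc : Multiset (Fin d → Bool), IsCompletion M' Mc ∧ HasDiamPartitionM Mc k r) ↔
        (∃ Nc : Multiset ({i // i ∈ D'} → Bool),
          IsCompletion (M'.map (restrictV D')) Nc ∧ HasDiamPartitionM Nc k r)) := by
  have hiff := exists_completion_partition_iff M' id k r
  rw [Multiset.map_id] at hiff
  simp only [hiff, exists_completion_partition_iff]
  set S := M'.toFinset
  by_cases hyes : HasColoredCompletion S id k r
  · exact ⟨∅, by simp, fun h => h.restrict ∅, fun _ => hyes⟩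
  obtain ⟨c, hck, hγ⟩ := exists_component_coloring S k r hcomp
  have hr : r < gammaMax S r * S.card := by
    by_contra hle
    exact hyes (hasColoredCompletion_of_mul_card_le hck hγ (not_lt.1 hle))
  have hSM : ∀ v ∈ S, v ∈ M := fun v hv =>
    Multiset.mem_of_le hM'M (Multiset.mem_toFinset.1 hv)
  have hHS : S \ R.toFinset ⊆ S := Finset.sdiff_subset
  obtain ⟨D₁, hD₁card, hD₁⟩ := exists_coords_of_known (H := S \ R.toFinset) (T := T) (c := c)
    (fun v hv i hi => (hcover v (hSM v (hHS hv)) i hi).resolve_left fun h =>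
      (Finset.mem_sdiff.1 hv).2 (Multiset.mem_toFinset.2 h))
    (fun v hv => hck v (hHS hv)) (fun v hv w hw => hγ v (hHS hv) w (hHS hw))
    (Finset.card_le_card hHS) hr
  obtain ⟨D₂, hD₂card, hD₂⟩ := exists_coords_of_mem S R.toFinset r
  have hScard : S.card - 1 ≤ Multiset.card M' - 1 :=
    Nat.sub_le_sub_right (Multiset.toFinset_card_le M') 1
  have hRcard : (S ∩ R.toFinset).card ≤ Multiset.card R :=
    (Finset.card_le_card Finset.inter_subset_right).trans (Multiset.toFinset_card_le R)
  have mono : ∀ {v w : Fin d → Option Bool} {D : Finset (Fin d)}, D ⊆ D₁ ∪ D₂ →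
      (disagree v w ⊆ D ∨ r < (disagree v w ∩ D).card) →
      disagree v w ⊆ D₁ ∪ D₂ ∨ r < (disagree v w ∩ (D₁ ∪ D₂)).card := by
    rintro v w D hD (h | h)
    · exact Or.inl (h.trans hD)
    · exact Or.inr (h.trans_le (Finset.card_le_card (Finset.inter_subset_inter_left hD)))
  refine ⟨D₁ ∪ D₂, ?_, fun h => h.restrict _, HasColoredCompletion.of_restrict ?_⟩
  · have h1 := Finset.card_union_le D₁ D₂
    have h2 : k * gammaMax S r * (S.card - 1) ≤ k * gammaMax S r * (Multiset.card M' - 1) :=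
      Nat.mul_le_mul_left _ hScard
    have h3 : (S ∩ R.toFinset).card * (S.card - 1) * (r + 1) ≤
        Multiset.card R * (Multiset.card M' - 1) * (r + 1) :=
      Nat.mul_le_mul_right _ (Nat.mul_le_mul hRcard hScard)
    omega
  · intro v hv w hw
    by_cases hvR : v ∈ R.toFinset
    · exact mono Finset.subset_union_right (hD₂ v (Finset.mem_inter.2 ⟨hv, hvR⟩) w hw)
    by_cases hwR : w ∈ R.toFinset
    · rw [disagree_comm]
      exact mono Finset.subset_union_right (hD₂ w (Finset.mem_inter.2 ⟨hw, hwR⟩) v hv)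
    · exact mono Finset.subset_union_left (hD₁ v (Finset.mem_sdiff.2 ⟨hv, hvR⟩) w
        (Finset.mem_sdiff.2 ⟨hw, hwR⟩))
end

section
/- Let k, r ∈ ℕ, let M be a finite multiset of vectors in {0,1,□}^d with cover (R_M, T_M), and let M' ⊆ M be such that the compatibility graph on M' with threshold 2r has at most k connected components, with γ_max(M') the maximum diameter of a connected component. Then there exists D' ⊆ [d] with |D'| ≤ k·γ_max(M')·(|M'|−1) + |R_M|·(|M'|−1)·(2r+1) + |T_M| such that the following holds: there exist a completion M* of M' and a set S ⊆ {0,1}^d with |S| ≤ k such that every vector of M* is within Hamming distance r of some vector in S, if and only if there exist a completion N* of M'_{D'} and a set S' ⊆ {0,1}^{D'} with |S'| ≤ k such that every vector of N* is within Hamming distance r of some vector in S'. -/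
open scoped Classical

/-- The coordinates on which two incomplete vectors are both known and differ. -/
noncomputable def conflicts {ι : Type} [Fintype ι] (a b : ι → Option Bool) : Finset ι :=
  Finset.univ.filter fun i => ∃ x y : Bool, a i = some x ∧ b i = some y ∧ x ≠ y

theorem pdist_eq_card_conflicts {ι : Type} [Fintype ι] (a b : ι → Option Bool) :
    pdist a b = (conflicts a b).card := rfl

theorem mem_conflicts {ι : Type} [Fintype ι] {a b : ι → Option Bool} {i : ι} :
    i ∈ conflicts a b ↔ ∃ x y : Bool, a i = some x ∧ b i = some y ∧ x ≠ y := by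
  simp [conflicts]

theorem conflicts_comm {ι : Type} [Fintype ι] (a b : ι → Option Bool) :
    conflicts a b = conflicts b a := by
  ext i
  simp only [mem_conflicts]
  constructor <;> rintro ⟨x, y, h₁, h₂, h₃⟩ <;> exact ⟨y, x, h₂, h₁, h₃.symm⟩

theorem conflicts_self {ι : Type} [Fintype ι] (a : ι → Option Bool) :
    conflicts a a = ∅ := by
  ext i
  simp only [mem_conflicts, Finset.notMem_empty, iff_false]
  rintro ⟨x, y, h₁, h₂, h₃⟩
  exact h₃ (Option.some.inj (h₁.symm.trans h₂))

theorem pdist_restrictV {ι : Type} [Fintype ι] (D : Finset ι) (a b : ι → Option Bool) :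
    pdist (restrictV D a) (restrictV D b) = (conflicts a b ∩ D).card := by
  rw [pdist_eq_card_conflicts, ← Finset.card_map (Function.Embedding.subtype (· ∈ D))]
  congr 1
  ext i
  simp only [Finset.mem_map, mem_conflicts, Finset.mem_inter, restrictV,
    Function.Embedding.subtype_apply, Subtype.exists]
  constructor
  · rintro ⟨j, hj, h, rfl⟩
    exact ⟨h, hj⟩
  · rintro ⟨h, hi⟩
    exact ⟨i, hi, h, rfl⟩

/-- Two incomplete vectors within distance `r` of a complete one have distance at most `2 * r`. -/
theorem pdist_le_of_center {ι : Type} [Fintype ι] {r : ℕ} (s : ι → Bool)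
    {a b : ι → Option Bool} (ha : pdist (fun i => some (s i)) a ≤ r)
    (hb : pdist (fun i => some (s i)) b ≤ r) : pdist a b ≤ 2 * r := by
  have hsub : conflicts a b ⊆
      conflicts (fun i => some (s i)) a ∪ conflicts (fun i => some (s i)) b := by
    intro i
    simp only [Finset.mem_union, mem_conflicts]
    rintro ⟨x, y, hx, hy, hxy⟩
    by_cases h : s i = x
    · exact Or.inr ⟨s i, y, rfl, hy, fun h' => hxy (h.symm.trans h')⟩
    · exact Or.inl ⟨s i, x, rfl, hx, h⟩
  have h₁ := Finset.card_le_card hsub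
  have h₂ := Finset.card_union_le (conflicts (fun i => some (s i)) a)
    (conflicts (fun i => some (s i)) b)
  simp only [pdist_eq_card_conflicts] at *
  omega

/-- `S` is a set of at most `k` complete vectors such that every vector of `F` is within
distance `r` of one of them. -/
def IsCenterSet {ι : Type} [Fintype ι] (F : Multiset (ι → Option Bool)) (k r : ℕ)
    (S : Finset (ι → Bool)) : Prop :=
  S.card ≤ k ∧ ∀ v ∈ F, ∃ s ∈ S, pdist (fun i => some (s i)) v ≤ r

theorem exists_completion_iff_exists_isCenterSet {ι : Type} [Fintype ι]
    (F : Multiset (ι → Option Bool)) (k r : ℕ) :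
    (∃ Mc : Multiset (ι → Bool), IsCompletion F Mc ∧
      ∃ S : Finset (ι → Bool), S.card ≤ k ∧ ∀ a ∈ Mc, ∃ s ∈ S, hammingDist s a ≤ r) ↔
    ∃ S, IsCenterSet F k r S := by
  constructor
  · rintro ⟨Mc, hMc, S, hS, h⟩
    refine ⟨S, hS, fun v hv => ?_⟩
    obtain ⟨c, hc, hvc⟩ := Multiset.exists_mem_of_rel_of_mem hMc hv
    obtain ⟨s, hs, hsc⟩ := h c hc
    refine ⟨s, hs, le_trans (Finset.card_le_card ?_) hsc⟩
    intro i hi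
    obtain ⟨x, y, hx, hy, hxy⟩ := mem_conflicts.1 hi
    simp only [Finset.mem_filter, Finset.mem_univ, true_and]
    rw [hvc i y hy, Option.some.inj hx]
    exact hxy
  · rintro ⟨S, hS, h⟩
    have h' : ∀ v, ∃ s : ι → Bool, v ∈ F → s ∈ S ∧ pdist (fun i => some (s i)) v ≤ r := by
      intro v
      by_cases hv : v ∈ F
      · obtain ⟨s, hs⟩ := h v hv
        exact ⟨s, fun _ => hs⟩
      · exact ⟨fun _ => false, fun h => absurd h hv⟩
    choose c hc using h'
    refine ⟨F.map fun v i => (v i).getD (c v i), ?_, S, hS, ?_⟩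
    · refine Multiset.rel_map_right.2 (Multiset.rel_refl_of_refl_on ?_)
      intro v _ i x hx
      simp [hx]
    · intro a ha
      obtain ⟨v, hv, rfl⟩ := Multiset.mem_map.1 ha
      refine ⟨c v, (hc v hv).1, le_trans (Finset.card_le_card ?_) (hc v hv).2⟩
      intro i hi
      simp only [Finset.mem_filter, Finset.mem_univ, true_and] at hi ⊢
      cases hvi : v i with
      | none => simp [hvi] at hi
      | some y => exact ⟨c v i, y, rfl, rfl, by simpa [hvi] using hi⟩

theorem IsCenterSet.exists_restrict {ι : Type} [Fintype ι] {F : Multiset (ι → Option Bool)}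
    {k r : ℕ} {S : Finset (ι → Bool)} (h : IsCenterSet F k r S) (D : Finset ι) :
    ∃ S', IsCenterSet (F.map (restrictV D)) k r S' := by
  refine ⟨S.image fun s i => s i.1, Finset.card_image_le.trans h.1, fun v hv => ?_⟩
  obtain ⟨w, hw, rfl⟩ := Multiset.mem_map.1 hv
  obtain ⟨s, hs, hsw⟩ := h.2 w hw
  refine ⟨_, Finset.mem_image_of_mem _ hs, ?_⟩
  change pdist (restrictV D fun i => some (s i)) _ ≤ r
  rw [pdist_restrictV]
  exact (Finset.card_le_card Finset.inter_subset_left).trans hsw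

/-- Centers on `D` extend to all coordinates if any two vectors that are close on `D` have
no conflict outside `D`. -/
theorem exists_isCenterSet_of_restrict {ι : Type} [Fintype ι] {F : Multiset (ι → Option Bool)}
    {k r : ℕ} {D : Finset ι}
    (hD : ∀ v ∈ F, ∀ w ∈ F, (conflicts v w ∩ D).card ≤ 2 * r → conflicts v w ⊆ D)
    {S' : Finset ({i // i ∈ D} → Bool)} (h : IsCenterSet (F.map (restrictV D)) k r S') :
    ∃ S, IsCenterSet F k r S := by
  let near : ({i // i ∈ D} → Bool) → (ι → Option Bool) → Prop := fun s v =>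
    v ∈ F ∧ pdist (fun i => some (s i)) (restrictV D v) ≤ r
  let ext : ({i // i ∈ D} → Bool) → ι → Bool := fun s i =>
    if hi : i ∈ D then s ⟨i, hi⟩ else decide (∃ w, near s w ∧ w i = some true)
  refine ⟨S'.image ext, Finset.card_image_le.trans h.1, fun v hv => ?_⟩
  obtain ⟨s, hs, hsv⟩ := h.2 _ (Multiset.mem_map_of_mem _ hv)
  refine ⟨ext s, Finset.mem_image_of_mem _ hs, ?_⟩
  have hrestr : restrictV D (fun i => some (ext s i)) = fun i => some (s i) := by
    funext i
    simp [restrictV, ext]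
  have hsub : conflicts (fun i => some (ext s i)) v ⊆ D := by
    intro i hi
    by_contra hiD
    obtain ⟨x, y, hx, hy, hxy⟩ := mem_conflicts.1 hi
    have hx' : decide (∃ w, near s w ∧ w i = some true) = x := by
      simpa [ext, hiD] using hx
    cases y with
    | true =>
      have : x = true := by
        rw [← hx']
        exact decide_eq_true ⟨v, ⟨hv, hsv⟩, hy⟩
      exact hxy this
    | false =>
      have hxt : x = true := by simpa using hxy
      obtain ⟨w, hw, hwi⟩ := of_decide_eq_true (hx'.trans hxt)
      have hvw := pdist_le_of_center s hsv hw.2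
      rw [pdist_restrictV] at hvw
      exact hiD (hD v hv w hw.1 hvw (mem_conflicts.2 ⟨false, true, hy, hwi, by simp⟩))
  rw [pdist_eq_card_conflicts, ← Finset.inter_eq_left.2 hsub, ← pdist_restrictV, hrestr]
  exact hsv

/-- A cyclic tournament: a total relation on a finite set in which everybody has
at most half of the elements as out-neighbours. -/
theorem exists_balanced_tournament {α : Type} (C : Finset α) :
    ∃ P : α → α → Prop, (∀ u ∈ C, ∀ v ∈ C, u ≠ v → P u v ∨ P v u) ∧
      ∀ u ∈ C, (C.filter (P u)).card ≤ C.card / 2 := by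
  set n := C.card
  obtain ⟨e, hlt, hinj⟩ : ∃ e : α → ℕ, (∀ u ∈ C, e u < n) ∧
      ∀ u ∈ C, ∀ v ∈ C, e u = e v → u = v := by
    refine ⟨fun u => if h : u ∈ C then C.equivFin ⟨u, h⟩ else 0, ?_, ?_⟩
    · intro u hu
      simp only [hu, dite_true]
      exact (C.equivFin ⟨u, hu⟩).2
    · intro u hu v hv h
      simp only [hu, hv, dite_true] at h
      simpa using C.equivFin.injective (Fin.ext h)
  let gap : α → α → ℕ := fun u v => if e u < e v then e v - e u else e v + n - e u
  refine ⟨fun u v => gap u v ≤ n / 2, ?_, ?_⟩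
  · intro u hu v hv huv
    have h₁ := hlt u hu
    have h₂ := hlt v hv
    have h₃ : e u ≠ e v := fun h => huv (hinj u hu v hv h)
    simp only [gap]
    split_ifs <;> omega
  · intro u hu
    have h₁ := hlt u hu
    have hmaps : ∀ v ∈ C.filter (fun v => gap u v ≤ n / 2), gap u v ∈ Finset.Icc 1 (n / 2) := by
      intro v hv
      rw [Finset.mem_filter] at hv
      refine Finset.mem_Icc.2 ⟨?_, hv.2⟩
      simp only [gap]
      split_ifs <;> omega
    have hgap : Set.InjOn (gap u) (C.filter fun v => gap u v ≤ n / 2) := by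
      intro v hv w hw h
      have hv' := (Finset.mem_filter.1 hv).1
      have hw' := (Finset.mem_filter.1 hw).1
      have h₂ := hlt v hv'
      have h₃ := hlt w hw'
      refine hinj v hv' w hw' ?_
      simp only [gap] at h
      split_ifs at h <;> omega
    simpa using Finset.card_le_card_of_injOn (gap u) hmaps hgap

/-- A set of incomplete vectors whose diameter is small compared to its cardinality
lies in a ball. -/
theorem exists_center_of_mul_card_le {ι : Type} [Fintype ι] (C : Finset (ι → Option Bool))
    {γ r : ℕ} (hγ : ∀ u ∈ C, ∀ v ∈ C, pdist u v ≤ γ) (hr : γ * C.card ≤ 2 * r) :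
    ∃ s : ι → Bool, ∀ v ∈ C, pdist (fun i => some (s i)) v ≤ r := by
  obtain ⟨P, htot, hout⟩ := exists_balanced_tournament C
  let s : ι → Bool := fun i =>
    !decide (∀ u ∈ C, u i = some true → ∃ w ∈ C, w i = some false ∧ P u w)
  refine ⟨s, fun v hv => ?_⟩
  have hsub : conflicts (fun i => some (s i)) v ⊆
      (C.filter (P v)).biUnion fun w => conflicts v w := by
    intro i hi
    obtain ⟨x, y, hx, hy, hxy⟩ := mem_conflicts.1 hi
    replace hx : s i = x := Option.some.inj hx
    simp only [Finset.mem_biUnion, Finset.mem_filter]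
    cases y with
    | true =>
      have hs : s i = false := by simpa [hx] using hxy
      have hs' : ∀ u ∈ C, u i = some true → ∃ w ∈ C, w i = some false ∧ P u w :=
        of_decide_eq_true (by simpa only [s, Bool.not_eq_false'] using hs)
      obtain ⟨w, hw, hwi, hP⟩ := hs' v hv hy
      exact ⟨w, ⟨hw, hP⟩, mem_conflicts.2 ⟨true, false, hy, hwi, by simp⟩⟩
    | false =>
      have hs : s i = true := by simpa [hx] using hxy
      have hs' : ¬ ∀ u ∈ C, u i = some true → ∃ w ∈ C, w i = some false ∧ P u w :=
        of_decide_eq_false (by simpa only [s, Bool.not_eq_true'] using hs)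
      push Not at hs'
      obtain ⟨u, hu, hui, hP⟩ := hs'
      have hne : u ≠ v := by
        rintro rfl
        simp [hui] at hy
      exact ⟨u, ⟨hu, (htot u hu v hv hne).resolve_left (hP v hv hy)⟩,
        mem_conflicts.2 ⟨false, true, hy, hui, by simp⟩⟩
  calc pdist (fun i => some (s i)) v
      ≤ ((C.filter (P v)).biUnion fun w => conflicts v w).card := Finset.card_le_card hsub
    _ ≤ (C.filter (P v)).card * γ :=
        Finset.card_biUnion_le_card_mul _ _ _ fun w hw => hγ v hv w (Finset.mem_filter.1 hw).1
    _ ≤ C.card / 2 * γ := Nat.mul_le_mul_right _ (hout v hv)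
    _ ≤ r := by
        have h₁ : 2 * (C.card / 2) ≤ C.card := Nat.mul_div_le _ _
        nlinarith

/-- Bondy's theorem: the distinct rows of a matrix with `n` rows can be told apart
by `n - 1` columns. -/
theorem exists_separating_coordinates {α ι β : Type} (f : α → ι → β) (U : Finset ι)
    (V : Finset α) :
    ∃ E ⊆ U, E.card ≤ V.card - 1 ∧
      ∀ u ∈ V, ∀ v ∈ V, (∀ i ∈ E, f u i = f v i) → ∀ i ∈ U, f u i = f v i := by
  induction V using Finset.induction_on with
  | empty => exact ⟨∅, by simp, by simp, by simp⟩
  | insert a V ha ih =>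
    obtain ⟨E, hEU, hE, hsep⟩ := ih
    rw [Finset.card_insert_of_notMem ha]
    by_cases h : ∃ u ∈ V, (∀ i ∈ E, f u i = f a i) ∧ ∃ i ∈ U, f u i ≠ f a i
    · obtain ⟨u, hu, huE, j, hjU, hj⟩ := h
      have hVpos : 0 < V.card := Finset.card_pos.2 ⟨u, hu⟩
      refine ⟨insert j E, Finset.insert_subset hjU hEU,
        (Finset.card_insert_le _ _).trans (by omega), ?_⟩
      have hno : ∀ v ∈ V, ¬ ∀ i ∈ insert j E, f v i = f a i := by
        intro v hv hva
        refine hj ?_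
        rw [← hva j (Finset.mem_insert_self _ _)]
        exact hsep u hu v hv (fun i hi => (huE i hi).trans
          (hva i (Finset.mem_insert_of_mem hi)).symm) j hjU
      intro v hv w hw hvw
      rcases Finset.mem_insert.1 hv with rfl | hv' <;>
        rcases Finset.mem_insert.1 hw with rfl | hw'
      · exact fun _ _ => rfl
      · exact absurd (fun i hi => (hvw i hi).symm) (hno w hw')
      · exact absurd hvw (hno v hv')
      · exact hsep v hv' w hw' fun i hi => hvw i (Finset.mem_insert_of_mem hi)
    · push Not at h
      refine ⟨E, hEU, by omega, ?_⟩
      intro v hv w hw hvw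
      rcases Finset.mem_insert.1 hv with rfl | hv' <;>
        rcases Finset.mem_insert.1 hw with rfl | hw'
      · exact fun _ _ => rfl
      · exact fun i hi => (h w hw' (fun i hi => (hvw i hi).symm) i hi).symm
      · exact h v hv' hvw
      · exact hsep v hv' w hw' hvw

/-- A version of `exists_separating_coordinates` with multiplicity: rows either agree on all the
columns left over, or differ in at least `m` of the chosen columns. -/
theorem exists_multiply_separating_coordinates {α ι β : Type} [DecidableEq β]
    (f : α → ι → β) (U : Finset ι) (V : Finset α) (m : ℕ) :
    ∃ E ⊆ U, E.card ≤ m * (V.card - 1) ∧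
      ∀ u ∈ V, ∀ v ∈ V, (∀ i ∈ U \ E, f u i = f v i) ∨
        m ≤ (E.filter fun i => f u i ≠ f v i).card := by
  induction m with
  | zero => exact ⟨∅, by simp, by simp, by simp⟩
  | succ m ih =>
    obtain ⟨E, hEU, hE, hsep⟩ := ih
    obtain ⟨E', hEU', hE', hsep'⟩ := exists_separating_coordinates f (U \ E) V
    refine ⟨E ∪ E', Finset.union_subset hEU (hEU'.trans Finset.sdiff_subset), ?_, ?_⟩
    · have := Finset.card_union_le E E'
      rw [Nat.succ_mul]
      omega
    · intro u hu v hv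
      by_cases h : ∀ i ∈ E', f u i = f v i
      · left
        intro i hi
        refine hsep' u hu v hv h i ?_
        simp only [Finset.mem_sdiff, Finset.mem_union, not_or] at hi ⊢
        exact ⟨hi.1, hi.2.1⟩
      · right
        push Not at h
        obtain ⟨j, hj, hne⟩ := h
        have hjU := Finset.mem_sdiff.1 (hEU' hj)
        have hm : m ≤ (E.filter fun i => f u i ≠ f v i).card :=
          (hsep u hu v hv).resolve_left fun h => hne (h j (hEU' hj))
        have hjn : j ∉ E.filter fun i => f u i ≠ f v i :=
          fun h => hjU.2 (Finset.mem_filter.1 h).1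
        have hsub : insert j (E.filter fun i => f u i ≠ f v i) ⊆
            (E ∪ E').filter fun i => f u i ≠ f v i := by
          intro i hi
          rcases Finset.mem_insert.1 hi with rfl | hi
          · exact Finset.mem_filter.2 ⟨Finset.mem_union_right _ hj, hne⟩
          · exact Finset.mem_filter.2
              ⟨Finset.mem_union_left _ (Finset.mem_filter.1 hi).1, (Finset.mem_filter.1 hi).2⟩
        have := Finset.card_le_card hsub
        rw [Finset.card_insert_of_notMem hjn] at this
        omega

theorem pdist_le_gammaMax {ι : Type} [Fintype ι] {F : Finset (ι → Option Bool)} {ρ : ℕ}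
    {a b : {x // x ∈ F}} (h : (compatGraph F ρ).Reachable a b) :
    pdist a.1 b.1 ≤ gammaMax F ρ := by
  refine le_csSup ⟨Fintype.card ι, ?_⟩ ⟨a, b, h, rfl⟩
  rintro n ⟨a, b, -, rfl⟩
  exact Finset.card_le_univ _

/-- If the components are of small diameter, one center per component suffices. -/
theorem exists_isCenterSet_of_gammaMax_mul_card_le {ι : Type} [Fintype ι]
    (F : Multiset (ι → Option Bool)) {k r ρ : ℕ}
    (hcomp : Nat.card (compatGraph F.toFinset ρ).ConnectedComponent ≤ k)
    (hr : gammaMax F.toFinset ρ * F.toFinset.card ≤ 2 * r) :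
    ∃ S, IsCenterSet F k r S := by
  let G := compatGraph F.toFinset ρ
  let comp : G.ConnectedComponent → Finset (ι → Option Bool) := fun c =>
    F.toFinset.filter fun v => ∃ h : v ∈ F.toFinset, G.connectedComponentMk ⟨v, h⟩ = c
  have hcenter : ∀ c, ∃ s : ι → Bool, ∀ v ∈ comp c, pdist (fun i => some (s i)) v ≤ r := by
    intro c
    refine exists_center_of_mul_card_le (comp c) (γ := gammaMax F.toFinset ρ) ?_
      ((Nat.mul_le_mul_left _ (Finset.card_le_card (Finset.filter_subset _ _))).trans hr)
    intro u hu v hv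
    obtain ⟨-, huF, hu'⟩ := Finset.mem_filter.1 hu
    obtain ⟨-, hvF, hv'⟩ := Finset.mem_filter.1 hv
    exact pdist_le_gammaMax (a := ⟨u, huF⟩) (b := ⟨v, hvF⟩)
      (SimpleGraph.ConnectedComponent.exact (hu'.trans hv'.symm))
  choose s hs using hcenter
  have : Fintype G.ConnectedComponent := Fintype.ofFinite _
  refine ⟨Finset.univ.image s, ?_, ?_⟩
  · refine Finset.card_image_le.trans ?_
    rw [Finset.card_univ, ← Nat.card_eq_fintype_card]
    exact hcomp
  · intro v hv
    have hv' := Multiset.mem_toFinset.2 hv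
    exact ⟨s (G.connectedComponentMk ⟨v, hv'⟩), Finset.mem_image_of_mem _ (Finset.mem_univ _),
      hs _ v (Finset.mem_filter.2 ⟨hv', hv', rfl⟩)⟩

/-- Each finite set of vectors can be retracted, inside the components of the compatibility graph,
onto a set of representatives with at most one element in each component. -/
theorem exists_component_representatives {ι : Type} [Fintype ι]
    (F N : Finset (ι → Option Bool)) (hN : N ⊆ F) (ρ : ℕ) :
    ∃ rep : (ι → Option Bool) → ι → Option Bool,
      (∀ v ∈ N, rep v ∈ N ∧ rep (rep v) = rep v ∧ pdist v (rep v) ≤ gammaMax F ρ) ∧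
      (N.image rep).card ≤ Nat.card (compatGraph F ρ).ConnectedComponent := by
  let G := compatGraph F ρ
  have hsel : ∀ c : G.ConnectedComponent, ∃ w : ι → Option Bool,
      (∃ v, ∃ h : v ∈ N, G.connectedComponentMk ⟨v, hN h⟩ = c) →
        ∃ h : w ∈ N, G.connectedComponentMk ⟨w, hN h⟩ = c := by
    intro c
    by_cases h : ∃ v, ∃ h : v ∈ N, G.connectedComponentMk ⟨v, hN h⟩ = c
    · obtain ⟨v, hv⟩ := h
      exact ⟨v, fun _ => hv⟩
    · exact ⟨fun _ => none, fun h' => absurd h' h⟩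
  choose sel hsel using hsel
  let rep : (ι → Option Bool) → ι → Option Bool := fun v =>
    if h : v ∈ F then sel (G.connectedComponentMk ⟨v, h⟩) else v
  have hrep : ∀ v (h : v ∈ N), rep v = sel (G.connectedComponentMk ⟨v, hN h⟩) :=
    fun v h => dif_pos (hN h)
  refine ⟨rep, fun v hv => ?_, ?_⟩
  · obtain ⟨hw, hc⟩ := hsel _ ⟨v, hv, rfl⟩
    rw [hrep v hv]
    refine ⟨hw, ?_, ?_⟩
    · rw [hrep _ hw, hc]
    · exact pdist_le_gammaMax (a := ⟨v, hN hv⟩) (b := ⟨_, hN hw⟩)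
        (SimpleGraph.ConnectedComponent.exact hc.symm)
  · have : Fintype G.ConnectedComponent := Fintype.ofFinite _
    have hsub : N.image rep ⊆ Finset.univ.image sel := by
      intro w hw
      obtain ⟨v, hv, rfl⟩ := Finset.mem_image.1 hw
      rw [hrep v hv]
      exact Finset.mem_image_of_mem _ (Finset.mem_univ _)
    refine (Finset.card_le_card hsub).trans (Finset.card_image_le.trans ?_)
    rw [Finset.card_univ, ← Nat.card_eq_fintype_card]

/-- For vectors that are complete outside `T`, few coordinates besides `T` suffice to detect
whether two vectors agree up to the chosen coordinates or are far apart on them. -/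
theorem exists_coordinates_of_complete_outside {ι : Type} [Fintype ι]
    (F N : Finset (ι → Option Bool)) (hN : N ⊆ F) (T : Finset ι) {k m ρ : ℕ}
    (hT : ∀ v ∈ N, ∀ i, v i = none → i ∈ T)
    (hcomp : Nat.card (compatGraph F ρ).ConnectedComponent ≤ k)
    (hm : m ≤ gammaMax F ρ * F.card) :
    ∃ E : Finset ι, E.card ≤ k * gammaMax F ρ * (F.card - 1) ∧
      ∀ v ∈ N, ∀ w ∈ N, conflicts v w ⊆ T ∪ E ∨ m ≤ (conflicts v w ∩ E).card := by
  set γ := gammaMax F ρ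
  obtain ⟨rep, hrep, hcard⟩ := exists_component_representatives F N hN ρ
  set V := N.image rep
  let E₀ : Finset ι := (N \ V).biUnion fun v => conflicts v (rep v)
  obtain ⟨E₁, hE₁U, hE₁, hsep⟩ :=
    exists_multiply_separating_coordinates (fun (v : ι → Option Bool) i => v i)
      (Finset.univ \ (T ∪ E₀)) V m
  have hVN : V ⊆ N := by
    intro w hw
    obtain ⟨v, hv, rfl⟩ := Finset.mem_image.1 hw
    exact (hrep v hv).1
  have hsome : ∀ v ∈ N, ∀ i ∉ T, ∃ x, v i = some x := fun v hv i hi =>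
    Option.ne_none_iff_exists'.1 fun h => hi (hT v hv i h)
  have hconf : ∀ v ∈ N, ∀ w ∈ N, ∀ i ∉ T, v i ≠ w i → i ∈ conflicts v w := by
    intro v hv w hw i hi hne
    obtain ⟨x, hx⟩ := hsome v hv i hi
    obtain ⟨y, hy⟩ := hsome w hw i hi
    refine mem_conflicts.2 ⟨x, y, hx, hy, fun h => hne ?_⟩
    rw [hx, hy, h]
  have hagree : ∀ v ∈ N, ∀ i ∈ Finset.univ \ (T ∪ E₀), v i = rep v i := by
    intro v hv i hi
    simp only [Finset.mem_sdiff, Finset.mem_univ, true_and, Finset.mem_union, not_or] at hi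
    by_contra hne
    by_cases hvV : v ∈ V
    · obtain ⟨u, hu, rfl⟩ := Finset.mem_image.1 hvV
      exact hne (congrFun (hrep u hu).2.1 i).symm
    · exact hi.2 (Finset.mem_biUnion.2
        ⟨v, Finset.mem_sdiff.2 ⟨hv, hvV⟩, hconf v hv _ (hrep v hv).1 i hi.1 hne⟩)
  refine ⟨E₀ ∪ E₁, ?_, ?_⟩
  · have h₀ : E₀.card ≤ (N.card - V.card) * γ := by
      rw [← Finset.card_sdiff_of_subset hVN]
      exact Finset.card_biUnion_le_card_mul _ _ _
        fun v hv => (hrep v (Finset.mem_sdiff.1 hv).1).2.2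
    have hNF : N.card ≤ F.card := Finset.card_le_card hN
    have hVN' : V.card ≤ N.card := Finset.card_le_card hVN
    have hVk : V.card ≤ k := hcard.trans hcomp
    refine (Finset.card_union_le _ _).trans ?_
    rcases Nat.eq_zero_or_pos V.card with hV0 | hVpos
    · have hN0 : N = ∅ := Finset.image_eq_empty.1 (Finset.card_eq_zero.1 hV0)
      have : N.card = 0 := by simp [hN0]
      simp only [hV0, this, Nat.zero_sub, mul_zero, zero_mul] at h₀ hE₁
      omega
    · obtain ⟨c, hc⟩ : ∃ c, V.card = c + 1 := ⟨V.card - 1, by omega⟩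
      obtain ⟨n, hn⟩ : ∃ n, F.card = n + 1 := ⟨F.card - 1, by omega⟩
      have h₁ : (N.card - V.card) * γ ≤ (n - c) * γ := Nat.mul_le_mul_right _ (by omega)
      have h₂ : m * (V.card - 1) ≤ γ * (n + 1) * c := by
        rw [hc, ← hn]
        exact Nat.mul_le_mul_right _ hm
      have h₃ : (c + 1) * γ * n ≤ k * γ * n := by
        gcongr
        omega
      have h₄ : (n - c) * γ + γ * (n + 1) * c = (c + 1) * γ * n := by
        obtain ⟨t, rfl⟩ : ∃ t, n = c + t := ⟨n - c, by omega⟩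
        rw [Nat.add_sub_cancel_left]
        ring
      rw [hn, Nat.add_sub_cancel]
      omega
  · intro v hv w hw
    rcases hsep _ (Finset.mem_image_of_mem rep hv) _ (Finset.mem_image_of_mem rep hw) with h | h
    · left
      intro i hi
      by_contra hiE
      simp only [Finset.mem_union, not_or] at hiE
      have hiU : i ∈ Finset.univ \ (T ∪ E₀) := by simp [hiE]
      have heq : v i = w i := by
        rw [hagree v hv i hiU, hagree w hw i hiU]
        exact h i (Finset.mem_sdiff.2 ⟨hiU, hiE.2.2⟩)
      obtain ⟨x, y, hx, hy, hxy⟩ := mem_conflicts.1 hi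
      exact hxy (Option.some.inj (hx.symm.trans (heq.trans hy)))
    · right
      refine h.trans (Finset.card_le_card ?_)
      intro i hi
      obtain ⟨hiE, hne⟩ := Finset.mem_filter.1 hi
      have hiU := hE₁U hiE
      have hiT : i ∉ T := fun h => (Finset.mem_sdiff.1 hiU).2 (Finset.mem_union_left _ h)
      refine Finset.mem_inter.2 ⟨hconf v hv w hw i hiT ?_, Finset.mem_union_right _ hiE⟩
      rw [hagree v hv i hiU, hagree w hw i hiU]
      exact hne

/-- For each pair of a vector in `Q` and a vector in `F`, keep up to `m` conflicts. -/
theorem exists_coordinates_of_pairs {ι : Type} [Fintype ι]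
    (F Q : Finset (ι → Option Bool)) (hQ : Q ⊆ F) (m : ℕ) :
    ∃ E : Finset ι, E.card ≤ Q.card * (F.card - 1) * m ∧
      ∀ v ∈ Q, ∀ w ∈ F, conflicts v w ⊆ E ∨ m ≤ (conflicts v w ∩ E).card := by
  have hsub : ∀ v w : ι → Option Bool, ∃ E ⊆ conflicts v w, E.card ≤ m ∧
      (conflicts v w ⊆ E ∨ m ≤ E.card) := by
    intro v w
    rcases le_total m (conflicts v w).card with h | h
    · obtain ⟨E, hE, hEm⟩ := Finset.exists_subset_card_eq h
      exact ⟨E, hE, hEm.le, Or.inr hEm.ge⟩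
    · exact ⟨_, subset_rfl, h, Or.inl subset_rfl⟩
  choose E hEsub hEcard hE using hsub
  refine ⟨Q.biUnion fun v => (F.erase v).biUnion (E v), ?_, ?_⟩
  · rw [mul_assoc]
    refine Finset.card_biUnion_le_card_mul _ _ _ fun v hv => ?_
    rw [← Finset.card_erase_of_mem (hQ hv)]
    exact Finset.card_biUnion_le_card_mul _ _ _ fun w _ => hEcard v w
  · intro v hv w hw
    by_cases hvw : v = w
    · left
      rw [hvw, conflicts_self]
      exact Finset.empty_subset _
    · have hin : E v w ⊆ Q.biUnion fun v => (F.erase v).biUnion (E v) := by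
        intro i hi
        exact Finset.mem_biUnion.2 ⟨v, hv, Finset.mem_biUnion.2
          ⟨w, Finset.mem_erase.2 ⟨Ne.symm hvw, hw⟩, hi⟩⟩
      rcases hE v w with h | h
      · exact Or.inl (h.trans hin)
      · exact Or.inr (h.trans (Finset.card_le_card
          (Finset.subset_inter (hEsub v w) hin)))

/-- Few coordinates suffice for any two vectors that are close on them to have no other
conflicts. -/
theorem exists_coordinates_of_cover {ι : Type} [Fintype ι] (F : Finset (ι → Option Bool))
    (R : Multiset (ι → Option Bool)) (T : Finset ι) {k m ρ : ℕ}
    (hcover : ∀ v ∈ F, ∀ i, v i = none → v ∈ R ∨ i ∈ T)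
    (hcomp : Nat.card (compatGraph F ρ).ConnectedComponent ≤ k)
    (hm : m < gammaMax F ρ * F.card) :
    ∃ D : Finset ι, D.card ≤ k * gammaMax F ρ * (F.card - 1)
        + Multiset.card R * (F.card - 1) * (m + 1) + T.card ∧
      ∀ v ∈ F, ∀ w ∈ F, (conflicts v w ∩ D).card ≤ m → conflicts v w ⊆ D := by
  obtain ⟨E, hE, hEsep⟩ := exists_coordinates_of_complete_outside F (F.filter (· ∉ R))
    (Finset.filter_subset _ _) T (m := m + 1)
    (fun v hv i hi => (hcover v (Finset.mem_filter.1 hv).1 i hi).resolve_left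
      (Finset.mem_filter.1 hv).2) hcomp hm
  obtain ⟨E', hE', hEsep'⟩ := exists_coordinates_of_pairs F (F.filter (· ∈ R))
    (Finset.filter_subset _ _) (m + 1)
  have hRcard : (F.filter (· ∈ R)).card ≤ Multiset.card R := by
    refine le_trans (Finset.card_le_card ?_) (Multiset.toFinset_card_le R)
    intro v hv
    exact Multiset.mem_toFinset.2 (Finset.mem_filter.1 hv).2
  refine ⟨E ∪ E' ∪ T, ?_, ?_⟩
  · have h₁ := Finset.card_union_le (E ∪ E') T
    have h₂ := Finset.card_union_le E E'
    have h₃ : (F.filter (· ∈ R)).card * (F.card - 1) * (m + 1) ≤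
        Multiset.card R * (F.card - 1) * (m + 1) := by gcongr
    omega
  · have key : ∀ v w : ι → Option Bool, ∀ A B : Finset ι, A ⊆ E ∪ E' ∪ T →
        B ⊆ E ∪ E' ∪ T → (conflicts v w ⊆ A ∨ m + 1 ≤ (conflicts v w ∩ B).card) →
        (conflicts v w ∩ (E ∪ E' ∪ T)).card ≤ m → conflicts v w ⊆ E ∪ E' ∪ T := by
      intro v w A B hA hB h hle
      rcases h with h | h
      · exact h.trans hA
      · have := Finset.card_le_card (Finset.inter_subset_inter (subset_refl (conflicts v w)) hB)
        omega
    have hE'sub : E' ⊆ E ∪ E' ∪ T := fun i hi => by simp [hi]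
    intro v hv w hw
    by_cases hvR : v ∈ R
    · exact key v w E' E' hE'sub hE'sub (hEsep' v (Finset.mem_filter.2 ⟨hv, hvR⟩) w hw)
    by_cases hwR : w ∈ R
    · rw [conflicts_comm]
      exact key w v E' E' hE'sub hE'sub (hEsep' w (Finset.mem_filter.2 ⟨hw, hwR⟩) v hv)
    · refine key v w (T ∪ E) E ?_ ?_ (hEsep v (Finset.mem_filter.2 ⟨hv, hvR⟩) w
        (Finset.mem_filter.2 ⟨hw, hwR⟩))
      · intro i hi
        rcases Finset.mem_union.1 hi with h | h <;> simp [h]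
      · intro i hi
        simp [hi]

theorem statement_9 {d : ℕ} (k r : ℕ)
    (M R : Multiset (Fin d → Option Bool)) (T : Finset (Fin d))
    (hRM : R ≤ M)
    (hcover : ∀ v ∈ M, ∀ i : Fin d, v i = none → v ∈ R ∨ i ∈ T)
    (M' : Multiset (Fin d → Option Bool)) (hM'M : M' ≤ M)
    (hcomp : Nat.card (compatGraph M'.toFinset (2 * r)).ConnectedComponent ≤ k) :
    ∃ D' : Finset (Fin d),
      D'.card ≤ k * gammaMax M'.toFinset (2 * r) * (Multiset.card M' - 1)
          + Multiset.card R * (Multiset.card M' - 1) * (2 * r + 1) + T.card ∧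
      ((∃ Mc : Multiset (Fin d → Bool), IsCompletion M' Mc ∧
          ∃ S : Finset (Fin d → Bool), S.card ≤ k ∧
            ∀ a ∈ Mc, ∃ s ∈ S, hammingDist s a ≤ r) ↔
        (∃ Nc : Multiset ({i // i ∈ D'} → Bool),
          IsCompletion (M'.map (restrictV D')) Nc ∧
          ∃ S' : Finset ({i // i ∈ D'} → Bool), S'.card ≤ k ∧
            ∀ a ∈ Nc, ∃ s ∈ S', hammingDist s a ≤ r)) := by
  simp only [exists_completion_iff_exists_isCenterSet]
  by_cases hr : gammaMax M'.toFinset (2 * r) * M'.toFinset.card ≤ 2 * r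
  · obtain ⟨S, hS⟩ := exists_isCenterSet_of_gammaMax_mul_card_le M' hcomp hr
    exact ⟨∅, by simp, fun _ => hS.exists_restrict ∅, fun _ => ⟨S, hS⟩⟩
  obtain ⟨D, hDcard, hD⟩ := exists_coordinates_of_cover M'.toFinset R T
    (fun v hv => hcover v (Multiset.mem_of_le hM'M (Multiset.mem_toFinset.1 hv))) hcomp
    (not_le.1 hr)
  refine ⟨D, hDcard.trans ?_, fun ⟨S, hS⟩ => hS.exists_restrict D, fun ⟨S', hS'⟩ =>
    exists_isCenterSet_of_restrict (fun v hv w hw => hD v (Multiset.mem_toFinset.2 hv) w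
      (Multiset.mem_toFinset.2 hw)) hS'⟩
  have hcard : M'.toFinset.card ≤ Multiset.card M' := Multiset.toFinset_card_le M'
  gcongr
end
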